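/- Let Λ be a basic, elementary finite-dimensional algebra with complete set E of primitive orthogonal idempotents, G a finite group acting on Λ preserving E, and A = Λ*G. Then for e ∈ E, the algebra e(A/⟨J_Λ⟩)e is isomorphic to the group algebra k·stab(e) of the stabilizer subgroup stab(e) = {g ∈ G : g(e) = e}, where ⟨J_Λ⟩ = A·J_Λ·A. Consequently, e is primitive as an idempotent of A if and only if k·stab(e) is a local algebra. -/

import Mathlib

/-! Every element of `A` is uniquely `∑ g, c g · u g` with `c g ∈ Λ`. Since `J_Λ` is a two-sided
ideal stable under `G`, the ideal `⟨J_Λ⟩` consists of the elements all of whose coefficients lie in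
`J_Λ` (`SkewGroupAlgebra.radicalCon_iff`). Products of `n` such elements have coefficients in
`J_Λ ^ n`, so `⟨J_Λ⟩` is nilpotent and contains no nonzero idempotent
(`SkewGroupAlgebra.eq_zero_of_isIdempotentElem`).

The assignment `h ↦ e · u h` on the stabilizer is multiplicative, and extends linearly to a map
`k[stab(e)] → A` (`SkewGroupAlgebra.stabMap`). Composed with the projection to `A/⟨J_Λ⟩` it is
injective because `e ∉ J_Λ`. It is onto the corner because the coefficient of `e a e` at `g` is
`e · c g · g(e)`: modulo `J_Λ` this is a multiple of `e` if `g(e) = e`, as `Λ` is elementary, and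
vanishes if `g(e) ≠ e`, as `Λ` is basic.

The equivalence is then formal (`SkewGroupAlgebra.primitive_iff_isLocalRing`). If the group algebra
is local, a decomposition of `e` into orthogonal idempotents becomes trivial in the corner, and
hence is trivial, since the kernel contains no nonzero idempotent. Conversely, if `e` is primitive,
lift an element `x` of the group algebra to `a ∈ e A e`. Fitting's lemma yields an idempotent
`a ^ m * b` in `e A e`, which must be `0` or `e`; so `x` is nilpotent or invertible, and `x` or
`1 - x` is a unit. -/

/-! For a basic elementary algebra `Λ` with `G`-action preserving the idempotents,
the corner algebra `e (A/⟨J_Λ⟩) e` of the skew group algebra `A = Λ * G` is isomorphic to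
the group algebra of the stabilizer `stab(e)`; consequently `e` is primitive in `A` iff
`k·stab(e)` is local. -/

universe u

/-- An axiomatization of the skew group algebra `A = Λ * G`. -/
structure SkewGroupAlgebra (k : Type u) [Field k] (Λ : Type u) [Ring Λ] [Algebra k Λ]
    (G : Type u) [Group G] [Fintype G] (σ : G →* (Λ ≃ₐ[k] Λ))
    (A : Type u) [Ring A] [Algebra k A] : Type u where
  ι : Λ →ₐ[k] A
  u : G →* Aˣ
  skew_comm : ∀ (g : G) (r : Λ), (u g : A) * ι r = ι (σ g r) * (u g : A)
  repr_unique : ∀ a : A, ∃! c : G → Λ, a = ∑ g : G, ι (c g) * (u g : A)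

/-- The stabilizer subgroup `stab(e) = {g ∈ G | g(e) = e}` of an element `e ∈ Λ` under an
action `σ` of `G` on `Λ`. -/
def stabSubgroup {k Λ G : Type u} [Field k] [Ring Λ] [Algebra k Λ] [Group G]
    (σ : G →* (Λ ≃ₐ[k] Λ)) (e : Λ) : Subgroup G where
  carrier := {g | σ g e = e}
  one_mem' := by simp
  mul_mem' := by
    intro a b ha hb
    simp only [Set.mem_setOf_eq] at *
    rw [map_mul, AlgEquiv.mul_apply, hb, ha]
  inv_mem' := by
    intro a ha
    simp only [Set.mem_setOf_eq] at *
    conv_lhs => rw [← ha]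
    rw [← AlgEquiv.mul_apply, ← map_mul, inv_mul_cancel, map_one, AlgEquiv.one_apply]

/-- The congruence on `A` defined by the two-sided ideal `⟨J_Λ⟩ = A·J_Λ·A` generated by
the Jacobson radical of `Λ`; its quotient is `A/⟨J_Λ⟩`. -/
def radicalCon {k Λ G A : Type u} [Field k] [Ring Λ] [Algebra k Λ]
    [Group G] [Fintype G] {σ : G →* (Λ ≃ₐ[k] Λ)} [Ring A] [Algebra k A]
    (S : SkewGroupAlgebra k Λ G σ A) : RingCon A :=
  ringConGen (fun a b => ∃ j ∈ Ideal.jacobson (⊥ : Ideal Λ), a = b + S.ι j)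

/-! ### Coefficients in the skew group algebra -/

namespace SkewGroupAlgebra

section
variable {k Λ G A : Type u} [Field k] [Ring Λ] [Algebra k Λ]
  [Group G] [Fintype G] {σ : G →* (Λ ≃ₐ[k] Λ)} [Ring A] [Algebra k A]
  (S : SkewGroupAlgebra k Λ G σ A)

/-- The `k`-linear identification of `A` with the functions `G → Λ` of coefficients, sending
`c` to `∑ g, c g · u g`. -/
noncomputable def ofCoeffs : (G → Λ) ≃ₗ[k] A :=
  LinearEquiv.ofBijective
    { toFun := fun c => ∑ g : G, S.ι (c g) * (S.u g : A)
      map_add' := fun c d => by simp [add_mul, Finset.sum_add_distrib]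
      map_smul' := fun t c => by simp [Finset.smul_sum] }
    ⟨fun c d h => (S.repr_unique (∑ g : G, S.ι (c g) * (S.u g : A))).unique rfl h,
      fun a => (S.repr_unique a).exists.imp fun _ h => h.symm⟩

theorem ofCoeffs_apply (c : G → Λ) : S.ofCoeffs c = ∑ g : G, S.ι (c g) * (S.u g : A) := rfl

/-- The coefficient function `G → Λ` of an element of `A`. -/
noncomputable def coeffs : A ≃ₗ[k] (G → Λ) := S.ofCoeffs.symm

theorem eq_sum_coeffs (a : A) : a = ∑ g : G, S.ι (S.coeffs a g) * (S.u g : A) :=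
  (S.ofCoeffs.apply_symm_apply a).symm

theorem coeffs_sum (c : G → Λ) : S.coeffs (∑ g : G, S.ι (c g) * (S.u g : A)) = c :=
  S.ofCoeffs.symm_apply_apply c

theorem coeffs_ι_mul_u [DecidableEq G] (r : Λ) (g : G) :
    S.coeffs (S.ι r * (S.u g : A)) = Pi.single g r := by
  rw [← S.coeffs_sum (Pi.single g r)]
  congr 1
  rw [Finset.sum_eq_single g] <;> simp +contextual

theorem monomial_mul (r s : Λ) (g h : G) :
    S.ι r * (S.u g : A) * (S.ι s * (S.u h : A)) = S.ι (r * σ g s) * (S.u (g * h) : A) := by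
  rw [mul_assoc, ← mul_assoc (S.u g : A), S.skew_comm, map_mul, map_mul, Units.val_mul]
  simp only [mul_assoc]

theorem coeffs_mul (a b : A) (h : G) :
    S.coeffs (a * b) h = ∑ g : G, S.coeffs a g * σ g (S.coeffs b (g⁻¹ * h)) := by
  suffices H : a * b = ∑ h : G, S.ι (∑ g : G, S.coeffs a g * σ g (S.coeffs b (g⁻¹ * h))) *
      (S.u h : A) by
    rw [H, coeffs_sum]
  conv_lhs => rw [S.eq_sum_coeffs a, S.eq_sum_coeffs b, Finset.sum_mul_sum]
  simp only [monomial_mul, map_sum, Finset.sum_mul]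
  rw [Finset.sum_comm (s := Finset.univ (α := G))]
  conv_rhs => rw [Finset.sum_comm]
  rw [Finset.sum_comm]
  refine Finset.sum_congr rfl fun g _ => ?_
  exact Fintype.sum_equiv (Equiv.mulLeft g) _ _ fun x => by simp

theorem coeffs_ι_mul_mul_ι (r s : Λ) (a : A) (g : G) :
    S.coeffs (S.ι r * a * S.ι s) g = r * S.coeffs a g * σ g s := by
  suffices H : S.ι r * a * S.ι s =
      ∑ g : G, S.ι (r * S.coeffs a g * σ g s) * (S.u g : A) by
    rw [H, coeffs_sum]
  conv_lhs => rw [S.eq_sum_coeffs a, Finset.mul_sum, Finset.sum_mul]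
  refine Finset.sum_congr rfl fun g _ => ?_
  rw [mul_assoc, mul_assoc, S.skew_comm, map_mul, map_mul]
  simp only [mul_assoc]

end

/-! ### The ideal generated by the Jacobson radical -/

theorem map_mem_jacobson {k Λ : Type u} [Field k] [Ring Λ] [Algebra k Λ] (τ : Λ ≃ₐ[k] Λ)
    {x : Λ} (hx : x ∈ Ideal.jacobson (⊥ : Ideal Λ)) : τ x ∈ Ideal.jacobson (⊥ : Ideal Λ) := by
  rw [Ideal.mem_jacobson_iff] at hx ⊢
  intro y
  obtain ⟨z, hz⟩ := hx (τ.symm y)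
  refine ⟨τ z, ?_⟩
  rw [Ideal.mem_bot] at hz ⊢
  simpa using congrArg τ hz

section
variable {k Λ G A : Type u} [Field k] [Ring Λ] [Algebra k Λ]
  [Group G] [Fintype G] {σ : G →* (Λ ≃ₐ[k] Λ)} [Ring A] [Algebra k A]
  (S : SkewGroupAlgebra k Λ G σ A)

/-- If the coefficients of `a` lie in `K` and those of `b` in the Jacobson radical, then the
coefficients of `a * b` lie in `K * J_Λ`, because `J_Λ` is stable under `G`. -/
theorem coeffs_mul_mem {K : Ideal Λ} {a b : A} (ha : ∀ g, S.coeffs a g ∈ K)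
    (hb : ∀ g, S.coeffs b g ∈ Ideal.jacobson (⊥ : Ideal Λ)) (g : G) :
    S.coeffs (a * b) g ∈ K * Ideal.jacobson (⊥ : Ideal Λ) := by
  rw [coeffs_mul]
  exact Ideal.sum_mem _ fun h _ => Ideal.mul_mem_mul (ha h) (map_mem_jacobson _ (hb _))

/-- The congruence generated by `J_Λ` is coefficientwise congruence modulo `J_Λ`: the ideal
`A·J_Λ·A` consists of the elements `∑ g, c g · u g` with all `c g` in `J_Λ`. -/
theorem radicalCon_iff (a b : A) :
    radicalCon S a b ↔ ∀ g, S.coeffs (a - b) g ∈ Ideal.jacobson (⊥ : Ideal Λ) := by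
  constructor
  · let c : RingCon A :=
      { r := fun a b => ∀ g, S.coeffs (a - b) g ∈ Ideal.jacobson (⊥ : Ideal Λ)
        iseqv :=
          { refl := fun a g => by simp
            symm := fun {a b} h g => by
              rw [← neg_sub, map_neg]
              exact neg_mem (h g)
            trans := fun {a b c} h h' g => by
              rw [← sub_add_sub_cancel a b c, map_add]
              exact add_mem (h g) (h' g) }
        add' := fun {a b c d} h h' g => by
          rw [add_sub_add_comm, map_add]
          exact add_mem (h g) (h' g)
        mul' := fun {a b c d} h h' g => by
          have e : a * c - b * d = a * (c - d) + (a - b) * d := by noncomm_ring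
          rw [e, map_add, Pi.add_apply, coeffs_mul, coeffs_mul]
          exact add_mem
            (Ideal.sum_mem _ fun x _ => Ideal.mul_mem_left _ _ (map_mem_jacobson _ (h' _)))
            (Ideal.sum_mem _ fun x _ => Ideal.mul_mem_right _ _ (h _)) }
    have hle : radicalCon S ≤ c := by
      refine RingCon.ringConGen_le.2 ?_
      rintro a b ⟨j, hj, rfl⟩ g
      classical
      have := S.coeffs_ι_mul_u j (1 : G)
      simp only [map_one, Units.val_one, mul_one] at this
      rw [add_sub_cancel_left, this, Pi.single_apply]
      split_ifs <;> simp [hj]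
    exact fun h => hle h
  · intro h
    have hι : ∀ j ∈ Ideal.jacobson (⊥ : Ideal Λ), (radicalCon S).mk' (S.ι j) = 0 := by
      intro j hj
      rw [← map_zero (radicalCon S).mk']
      exact (RingCon.eq _).2 (RingCon.le_ringConGen _ _ ⟨j, hj, by simp⟩)
    rw [← RingCon.eq]
    change (radicalCon S).mk' a = (radicalCon S).mk' b
    rw [← sub_eq_zero, ← map_sub, S.eq_sum_coeffs (a - b), map_sum]
    exact Finset.sum_eq_zero fun g _ => by rw [map_mul, hι _ (h g), zero_mul]

theorem mk_eq_mk_iff (a b : A) :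
    (radicalCon S).mk' a = (radicalCon S).mk' b ↔
      ∀ g, S.coeffs (a - b) g ∈ Ideal.jacobson (⊥ : Ideal Λ) :=
  (RingCon.eq _).trans (S.radicalCon_iff a b)

/-- An idempotent of `A` lying in `⟨J_Λ⟩` vanishes, since `⟨J_Λ⟩` is nilpotent along with
`J_Λ`. -/
theorem eq_zero_of_isIdempotentElem [FiniteDimensional k Λ] {f : A} (hf : IsIdempotentElem f)
    (h : (radicalCon S).mk' f = 0) : f = 0 := by
  rw [← map_zero (radicalCon S).mk', mk_eq_mk_iff, sub_zero] at h
  have : IsArtinianRing Λ := IsArtinianRing.of_finite k Λ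
  obtain ⟨n, hn⟩ := IsArtinianRing.isNilpotent_jacobson_bot (R := Λ)
  have key : ∀ m : ℕ, ∀ g, S.coeffs f g ∈ Ideal.jacobson (⊥ : Ideal Λ) ^ m := by
    intro m
    induction m with
    | zero => simp [Submodule.pow_zero, Ideal.one_eq_top]
    | succ m ih =>
      intro g
      rw [← hf.eq, Submodule.pow_succ]
      exact S.coeffs_mul_mem ih h g
  refine S.coeffs.map_eq_zero_iff.1 (funext fun g => ?_)
  simpa [hn] using key n g

theorem ι_injective : Function.Injective S.ι := by
  classical
  intro r s h
  have hr := S.coeffs_ι_mul_u r (1 : G)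
  rw [h, S.coeffs_ι_mul_u s] at hr
  exact (Pi.single_injective (M := fun _ => Λ) 1 hr).symm

/-! ### The map from the group algebra of the stabilizer -/

/-- The multiplicative map `h ↦ e · u h` from the stabilizer of an idempotent `e` to `A`. -/
noncomputable def stabHom {e : Λ} (he : IsIdempotentElem e) : stabSubgroup σ e →ₙ* A where
  toFun h := S.ι e * (S.u h : A)
  map_mul' x y := by
    rw [S.monomial_mul, show σ x e = e from x.2, he.eq]
    rfl

/-- The map `k[stab(e)] → A` sending `∑ x_h h` to `∑ x_h e · u h`; it takes the unit to `e`. -/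
noncomputable def stabMap {e : Λ} (he : IsIdempotentElem e) :
    MonoidAlgebra k (stabSubgroup σ e) →+ A :=
  MonoidAlgebra.liftNC (algebraMap k A : k →+ A) (S.stabHom he)

theorem stabMap_single {e : Λ} (he : IsIdempotentElem e) (h : stabSubgroup σ e) (t : k) :
    S.stabMap he (MonoidAlgebra.single h t) = S.ι (t • e) * (S.u (h : G) : A) := by
  simp [stabMap, stabHom, Algebra.smul_def, mul_assoc]

theorem stabMap_mul {e : Λ} (he : IsIdempotentElem e)
    (x y : MonoidAlgebra k (stabSubgroup σ e)) :
    S.stabMap he (x * y) = S.stabMap he x * S.stabMap he y :=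
  MonoidAlgebra.liftNC_mul (algebraMap k A) (S.stabHom he) x y
    fun _ => Algebra.commute_algebraMap_left _ _

theorem stabMap_one {e : Λ} (he : IsIdempotentElem e) : S.stabMap he 1 = S.ι e := by
  rw [MonoidAlgebra.one_def, stabMap_single]
  simp

theorem coeffs_stabMap {e : Λ} (he : IsIdempotentElem e)
    (x : MonoidAlgebra k (stabSubgroup σ e)) (g : G) :
    (∀ h : stabSubgroup σ e, (h : G) = g → S.coeffs (S.stabMap he x) g = x.coeff h • e) ∧
      (g ∉ stabSubgroup σ e → S.coeffs (S.stabMap he x) g = 0) := by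
  classical
  induction x using MonoidAlgebra.induction_linear with
  | zero => simp
  | add x y hx hy =>
    refine ⟨fun h hg => ?_, fun hg => ?_⟩
    · simp [hx.1 h hg, hy.1 h hg, add_smul]
    · simp [hx.2 hg, hy.2 hg]
  | single m r =>
    rw [stabMap_single, coeffs_ι_mul_u]
    refine ⟨?_, fun hg => ?_⟩
    · rintro h rfl
      by_cases hm : m = h
      · simp [hm]
      · have : (h : G) ≠ m := fun H => hm (Subtype.ext H.symm)
        simp [this, hm]
    · have : g ≠ m := fun H => hg (H ▸ m.2)
      simp [this]

end

/-! ### Primitive idempotents and local corners -/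

/-- Fitting's lemma for one element of a finite-dimensional algebra: some power `a ^ (n + 1)`
commutes with an element `b` such that the idempotent `a ^ (n + 1) * b` fixes `a ^ (n + 1)`. -/
theorem exists_fitting (k : Type u) {A : Type u} [Field k] [Ring A] [Algebra k A]
    [FiniteDimensional k A] (a : A) :
    ∃ (n : ℕ) (b : A), a ^ (n + 1) * b = b * a ^ (n + 1) ∧
      a ^ (n + 1) * b * a ^ (n + 1) = a ^ (n + 1) := by
  open Polynomial in
  have hint : IsIntegral k a := Algebra.IsIntegral.isIntegral a
  obtain ⟨q, hq, hnd⟩ := exists_eq_pow_rootMultiplicity_mul_and_not_dvd (minpoly k a)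
    (minpoly.ne_zero hint) 0
  generalize (minpoly k a).rootMultiplicity 0 = n at hq
  rw [map_zero, sub_zero] at hq hnd
  -- `X` is prime to the cofactor `q`, so Bezout inverts `X ^ (n + 1)` modulo `q`.
  obtain ⟨u, v, huv⟩ : IsCoprime ((X : k[X]) ^ (n + 1)) q :=
    IsCoprime.pow_left ((irreducible_X.coprime_iff_not_dvd).2 hnd)
  have hz : aeval a ((X : k[X]) ^ n * q) = 0 := by rw [← hq]; exact minpoly.aeval k a
  have hp : (X : k[X]) ^ (n + 1) * u * X ^ (n + 1) = X ^ (n + 1) - X * v * (X ^ n * q) := by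
    linear_combination (X : k[X]) ^ (n + 1) * huv
  refine ⟨n, aeval a u, ?_, ?_⟩
  · have := congrArg (aeval a) (mul_comm ((X : k[X]) ^ (n + 1)) u)
    simpa using this
  · have := congrArg (aeval a) hp
    rw [map_sub, map_mul _ (X * v), hz, mul_zero, sub_zero] at this
    simpa using this

/-- Locality of `R` is the absence of nontrivial decompositions `e = f + f'` into orthogonal
idempotents of `A`, whenever `φ` identifies `R` with the corner at `π e` of the image of `A`
under a surjection `π` whose kernel contains no nonzero idempotent. -/
theorem primitive_iff_isLocalRing (k : Type u) {A Q R : Type u} [Field k] [Ring A] [Algebra k A]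
    [FiniteDimensional k A] [Ring Q] [Ring R] [Nontrivial R] (π : A →+* Q)
    (hπ : Function.Surjective π) (hker : ∀ f, IsIdempotentElem f → π f = 0 → f = 0)
    {e : A} (he : IsIdempotentElem e) (φ : R →+ Q) (hinj : Function.Injective φ)
    (hmul : ∀ x y, φ (x * y) = φ x * φ y) (hone : φ 1 = π e)
    (hrange : Set.range φ = {q | π e * q * π e = q}) :
    (e ≠ 0 ∧ ∀ f f' : A, IsIdempotentElem f → IsIdempotentElem f' →
        f * f' = 0 → f' * f = 0 → e = f + f' → f = 0 ∨ f' = 0) ↔ IsLocalRing R := by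
  have hcorner : ∀ q, π e * q * π e = q → ∃ x, φ x = q := fun q hq => by
    have : q ∈ Set.range φ := by rw [hrange]; exact hq
    exact this
  constructor
  · rintro ⟨-, hprim⟩
    constructor
    intro x y hxy
    obtain ⟨a₀, ha₀⟩ := hπ (φ x)
    -- A lift of `x` inside the corner `e A e`.
    obtain ⟨a, hea, hae, ha⟩ : ∃ a, e * a = a ∧ a * e = a ∧ π a = φ x := by
      refine ⟨e * a₀ * e, ?_, ?_, ?_⟩
      · rw [← mul_assoc, ← mul_assoc, he.eq]
      · rw [mul_assoc, he.eq]
      · rw [map_mul, map_mul, ha₀, ← hone, ← hmul, ← hmul, one_mul, mul_one]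
    have hpow : ∀ n : ℕ, π (a ^ (n + 1)) = φ (x ^ (n + 1)) := by
      intro n
      induction n with
      | zero => simpa using ha
      | succ n ih => rw [pow_succ, map_mul, ih, ha, ← hmul, ← pow_succ]
    obtain ⟨n, b, hcomm, hfix⟩ := exists_fitting k a
    set c := a ^ (n + 1) with hc
    have hec : e * c = c := by rw [hc, pow_succ', ← mul_assoc, hea]
    have hce : c * e = c := by rw [hc, pow_succ, mul_assoc, hae]
    have hidem : IsIdempotentElem (c * b) := by
      change c * b * (c * b) = c * b
      rw [← mul_assoc, hfix]
    have hl : e * (c * b) = c * b := by rw [← mul_assoc, hec]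
    have hr : c * b * e = c * b := by rw [hcomm, mul_assoc, hce]
    have hcase := hprim (c * b) (e - c * b) hidem
      (by change (e - c * b) * (e - c * b) = e - c * b
          rw [mul_sub, sub_mul, sub_mul, he.eq, hl, hr, hidem.eq, sub_self, sub_zero])
      (by rw [mul_sub, hr, hidem.eq, sub_self]) (by rw [sub_mul, hl, hidem.eq, sub_self])
      (by abel)
    rcases hcase with h0 | h1
    · -- The lift, hence `x`, is nilpotent, so `y = 1 - x` is invertible.
      right
      have hc0 : c = 0 := by rw [← hfix, h0, zero_mul]
      have hx : IsNilpotent x := ⟨n + 1, hinj (by rw [← hpow, ← hc, hc0, map_zero, map_zero])⟩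
      rw [show y = 1 - x from eq_sub_of_add_eq' hxy]
      exact hx.isUnit_one_sub
    · -- The lift is invertible in the corner, with inverse power `e * b * e`.
      left
      have hcb : c * b = e := (sub_eq_zero.1 h1).symm
      have hbc : b * c = e := by rw [← hcomm, hcb]
      obtain ⟨z, hz⟩ := hcorner (π (e * b * e)) (by
        rw [← map_mul, ← map_mul]
        congr 1
        rw [mul_assoc e b e, ← mul_assoc e e, he.eq, mul_assoc, mul_assoc, he.eq])
      have h1 : x ^ (n + 1) * z = 1 := hinj (by
        rw [hmul, ← hpow, ← hc, hz, ← map_mul, ← mul_assoc, ← mul_assoc, hce, hcb, he.eq, hone])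
      have h2 : z * x ^ (n + 1) = 1 := hinj (by
        rw [hmul, ← hpow, ← hc, hz, ← map_mul, mul_assoc, hec, mul_assoc, hbc, he.eq, hone])
      exact (isUnit_pow_succ_iff (n := n)).1 ⟨⟨_, _, h1, h2⟩, rfl⟩
  · intro hloc
    refine ⟨?_, ?_⟩
    · rintro rfl
      exact one_ne_zero (hinj (by rw [hone, map_zero, map_zero]) : (1 : R) = 0)
    · intro f f' hf hf' hff' hf'f hsum
      have lift : ∀ p p' : A, IsIdempotentElem p → p * p' = 0 → p' * p = 0 → e = p + p' →
          ∃ x, φ x = π p := by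
        rintro p p' hp hpp' hp'p rfl
        refine hcorner _ ?_
        rw [← map_mul, ← map_mul, add_mul, hp.eq, hp'p, add_zero, mul_add, hp.eq, hpp', add_zero]
      obtain ⟨x, hx⟩ := lift f f' hf hff' hf'f hsum
      obtain ⟨x', hx'⟩ := lift f' f hf' hf'f hff' (hsum.trans (add_comm _ _))
      have hxx' : x * x' = 0 := hinj (by rw [hmul, hx, hx', ← map_mul, hff', map_zero, map_zero])
      have hx'x : x' * x = 0 := hinj (by rw [hmul, hx, hx', ← map_mul, hf'f, map_zero, map_zero])
      have h1 : x + x' = 1 := hinj (by rw [map_add, hx, hx', ← map_add, ← hsum, hone])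
      rcases IsLocalRing.isUnit_or_isUnit_of_add_one h1 with h | h
      · right
        exact hker _ hf' (by rw [← hx', h.mul_right_eq_zero.1 hxx', map_zero])
      · left
        exact hker _ hf (by rw [← hx, h.mul_right_eq_zero.1 hx'x, map_zero])

end SkewGroupAlgebra

/-! ### The corner at a primitive idempotent -/

/-- Let `Λ` be basic and elementary with complete set `E` of primitive orthogonal
idempotents preserved by the `G`-action, and let `e ∈ E`.  Then
`e (A/⟨J_Λ⟩) e ≅ k·stab(e)` as algebras (there is an injective multiplicative additive map
from `k[stab(e)]` onto the corner, sending `1` to the class of `e`); consequently, `e` is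
primitive as an idempotent of `A` if and only if the group algebra `k·stab(e)` is local. -/
theorem corner_iso_groupAlgebra_stabilizer
    (k Λ G A : Type u) [Field k] [Ring Λ] [Algebra k Λ] [FiniteDimensional k Λ]
    [Group G] [Fintype G] (σ : G →* (Λ ≃ₐ[k] Λ)) [Ring A] [Algebra k A]
    (S : SkewGroupAlgebra k Λ G σ A)
    (E : Finset Λ)
    (hidem : ∀ e ∈ E, IsIdempotentElem e)
    (horth : ∀ e ∈ E, ∀ e' ∈ E, e ≠ e' → e * e' = 0)
    (hsum : E.sum id = 1)
    (hprim : ∀ e ∈ E, e ≠ 0 ∧ ∀ f f' : Λ, IsIdempotentElem f → IsIdempotentElem f' →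
      f * f' = 0 → f' * f = 0 → e = f + f' → f = 0 ∨ f' = 0)
    (hbasic : ∀ e ∈ E, ∀ e' ∈ E, e ≠ e' →
      ∀ x : Λ, e * x * e' ∈ Ideal.jacobson (⊥ : Ideal Λ))
    (helem : ∀ e ∈ E, ∀ x : Λ,
      ∃ c : k, e * x * e - c • e ∈ Ideal.jacobson (⊥ : Ideal Λ))
    (hE : ∀ (g : G), ∀ e ∈ E, σ g e ∈ E)
    (e : Λ) (he : e ∈ E) :
    (∃ φ : MonoidAlgebra k (stabSubgroup σ e) →+ (radicalCon S).Quotient,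
      Function.Injective φ ∧
      (∀ x y, φ (x * y) = φ x * φ y) ∧
      φ 1 = (radicalCon S).mk' (S.ι e) ∧
      Set.range φ = {q | (radicalCon S).mk' (S.ι e) * q * (radicalCon S).mk' (S.ι e) = q}) ∧
    ((S.ι e ≠ 0 ∧ ∀ f f' : A, IsIdempotentElem f → IsIdempotentElem f' →
        f * f' = 0 → f' * f = 0 → S.ι e = f + f' → f = 0 ∨ f' = 0) ↔
      IsLocalRing (MonoidAlgebra k (stabSubgroup σ e))) := by
  have hidem_e := hidem e he
  have hidem_ι : IsIdempotentElem (S.ι e) := hidem_e.map S.ι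
  have hfin : FiniteDimensional k A := Module.Finite.equiv S.ofCoeffs
  have hker : ∀ f : A, IsIdempotentElem f → (radicalCon S).mk' f = 0 → f = 0 :=
    fun f hf h => S.eq_zero_of_isIdempotentElem hf h
  have heJ : e ∉ Ideal.jacobson (⊥ : Ideal Λ) := by
    intro h
    refine (hprim e he).1 (S.ι_injective ?_)
    rw [map_zero]
    refine hker _ hidem_ι ?_
    rw [← map_zero (radicalCon S).mk']
    exact (RingCon.eq _).2 (RingCon.le_ringConGen _ _ ⟨e, h, by simp⟩)
  let φ : MonoidAlgebra k (stabSubgroup σ e) →+ (radicalCon S).Quotient :=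
    ((radicalCon S).mk' : A →+ (radicalCon S).Quotient).comp (S.stabMap hidem_e)
  have hφ : ∀ x, φ x = (radicalCon S).mk' (S.stabMap hidem_e x) := fun _ => rfl
  have hmul : ∀ x y, φ (x * y) = φ x * φ y := fun x y => by
    rw [hφ, hφ, hφ, S.stabMap_mul, map_mul]
  have hone : φ 1 = (radicalCon S).mk' (S.ι e) := by rw [hφ, S.stabMap_one]
  have hinj : Function.Injective φ := by
    refine (injective_iff_map_eq_zero φ).2 fun x hx => ?_
    rw [hφ, ← map_zero (radicalCon S).mk', S.mk_eq_mk_iff, sub_zero] at hx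
    refine MonoidAlgebra.ext (Finsupp.ext fun h => ?_)
    by_contra hne
    have hne' : x.coeff h ≠ 0 := hne
    have hmem := hx h
    rw [(S.coeffs_stabMap hidem_e x h).1 h rfl] at hmem
    refine heJ ?_
    have := Ideal.mul_mem_left _ (algebraMap k Λ (x.coeff h)⁻¹) hmem
    rwa [← Algebra.smul_def, inv_smul_smul₀ hne'] at this
  have hrange : Set.range φ =
      {q | (radicalCon S).mk' (S.ι e) * q * (radicalCon S).mk' (S.ι e) = q} := by
    ext q
    constructor
    · rintro ⟨x, rfl⟩
      change _ * _ * _ = _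
      rw [← hone, ← hmul, ← hmul, one_mul, mul_one]
    · intro hq
      obtain ⟨a, rfl⟩ := (radicalCon S).mk'_surjective q
      -- Modulo `J_Λ`, the coefficient of `e a e` at `g` is a scalar multiple of `e` if `g`
      -- fixes `e`, and `0` otherwise.
      choose c hc using fun g : G => helem e he (S.coeffs a g)
      refine ⟨.ofCoeff (Finsupp.equivFunOnFinite.symm fun h => c h), ?_⟩
      rw [← show _ = (radicalCon S).mk' a from hq, hφ, ← map_mul, ← map_mul, eq_comm,
        S.mk_eq_mk_iff]
      intro g
      rw [map_sub, Pi.sub_apply, S.coeffs_ι_mul_mul_ι]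
      by_cases hg : g ∈ stabSubgroup σ e
      · rw [(S.coeffs_stabMap hidem_e _ g).1 ⟨g, hg⟩ rfl, show σ g e = e from hg]
        exact hc g
      · rw [(S.coeffs_stabMap hidem_e _ g).2 hg, sub_zero]
        exact hbasic e he _ (hE g e he) (fun h => hg h.symm) _
  exact ⟨⟨φ, hinj, hmul, hone, hrange⟩,
    SkewGroupAlgebra.primitive_iff_isLocalRing k (radicalCon S).mk'
      (radicalCon S).mk'_surjective hker hidem_ι φ hinj hmul hone hrange⟩
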